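/- Let n ≥ 4 and let L be a Cartan type Lie superalgebra over ℂ, i.e. one of W(n), S(n), S̃(n) (n even), or H(n) (n > 4), with its ℤ-grading. Then L is generated as a Lie superalgebra by L_{−1} ⊕ L_0 ⊕ L_1: the smallest subalgebra of L containing L_{−1} ⊕ L_0 ⊕ L_1 equals L. -/

import Mathlib

open scoped BigOperators

noncomputable section

namespace CartanSuper

/-- Coordinates of the exterior algebra `Λ(n)` with respect to the monomial basis
`{x_S : S ⊆ {1,…,n}}`. -/
abbrev Lambda (n : ℕ) := Finset (Fin n) → ℂ

/-- Endomorphism algebra of `Λ(n)`. -/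
abbrev E (n : ℕ) := Module.End ℂ (Lambda n)

variable (n : ℕ)

/-- `(−1)^k`. -/
def msign (k : ℕ) : ℂ := (-1 : ℂ) ^ k

/-- The basis monomial `x_S = x_{i₁}⋯x_{i_k}` (indices in increasing order). -/
def mono (S : Finset (Fin n)) : Lambda n := fun T => if T = S then 1 else 0

/-- Number of inversions between `S` and `T`. -/
def inversions (S T : Finset (Fin n)) : ℕ := ((S ×ˢ T).filter fun p => p.2 < p.1).card

/-- The multiplication of `Λ(n)` in coordinates:
`x_S · x_T = (−1)^{inversions} x_{S ∪ T}` for disjoint `S, T` and `0` otherwise. -/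
def lmulFun (f g : Lambda n) : Lambda n :=
  fun U => ∑ S ∈ U.powerset, msign (inversions n S (U \ S)) * f S * g (U \ S)

/-- Left multiplication by an element of `Λ(n)`, as a linear map `Λ(n) →ₗ End Λ(n)`. -/
def mulOp : Lambda n →ₗ[ℂ] E n where
  toFun f :=
    { toFun := lmulFun n f
      map_add' := by
        intro g h; funext U
        simp [lmulFun, mul_add, Finset.sum_add_distrib]
      map_smul' := by
        intro c g; funext U
        simp only [lmulFun, Pi.smul_apply, smul_eq_mul, RingHom.id_apply, Finset.mul_sum]
        exact Finset.sum_congr rfl (by intros; ring) }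
  map_add' := by
    intro f g; apply LinearMap.ext; intro h; funext U
    show lmulFun n (f + g) h U = lmulFun n f h U + lmulFun n g h U
    simp only [lmulFun]
    rw [← Finset.sum_add_distrib]
    exact Finset.sum_congr rfl (by intros; simp [Pi.add_apply]; ring)
  map_smul' := by
    intro c f; apply LinearMap.ext; intro h; funext U
    show lmulFun n (c • f) h U = (c • lmulFun n f h) U
    simp only [lmulFun, Pi.smul_apply, smul_eq_mul, Finset.mul_sum]
    exact Finset.sum_congr rfl (by intros; ring)

/-- The superderivation `∂_i` of `Λ(n)`, in coordinates. -/
def pd (i : Fin n) : E n where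
  toFun f := fun S =>
    if i ∈ S then 0 else msign (S.filter (· < i)).card * f (insert i S)
  map_add' := by
    intro f g; funext S; by_cases h : i ∈ S <;> simp [h, mul_add]
  map_smul' := by
    intro c f; funext S; by_cases h : i ∈ S <;> simp [h] <;> ring

/-- The parity operator `σ` of `Λ(n)`: `σ(x_S) = (−1)^{|S|} x_S`. -/
def par : E n where
  toFun f := fun S => msign S.card * f S
  map_add' := by intro f g; funext S; simp [mul_add]
  map_smul' := by intro c f; funext S; simp; ring

/-- The super-commutator `[D,F] = D∘F − (−1)^{|D||F|} F∘D`, extended bilinearly to all of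
`End Λ(n)` using the parity operator `σ`
(for homogeneous `D`, `σ∘D∘σ = (−1)^{|D|} D`). -/
def sbFun (D F : E n) : E n :=
  D * F - (2:ℂ)⁻¹ • ((F + par n * F * par n) * D + (F - par n * F * par n) * (par n * D * par n))

/-- The super-commutator as a bilinear map. -/
def sbL : E n →ₗ[ℂ] E n →ₗ[ℂ] E n :=
  LinearMap.mk₂ ℂ (sbFun n)
    (fun D D' F => by
      simp only [sbFun, add_mul, sub_mul, mul_add, mul_sub, smul_mul_assoc, mul_smul_comm,
        smul_add, smul_sub]
      module)
    (fun c D F => by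
      simp only [sbFun, add_mul, sub_mul, mul_add, mul_sub, smul_mul_assoc, mul_smul_comm,
        smul_add, smul_sub]
      module)
    (fun D F F' => by
      simp only [sbFun, add_mul, sub_mul, mul_add, mul_sub, smul_mul_assoc, mul_smul_comm,
        smul_add, smul_sub]
      module)
    (fun c D F => by
      simp only [sbFun, add_mul, sub_mul, mul_add, mul_sub, smul_mul_assoc, mul_smul_comm,
        smul_add, smul_sub]
      module)

/-- Shorthand for the super-commutator. -/
def sb (D F : E n) : E n := sbL n D F

/-- The ℤ₂-homogeneous component of `Λ(n)` of parity `p`. -/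
def lpar (p : ZMod 2) : Submodule ℂ (Lambda n) where
  carrier := {f | ∀ S : Finset (Fin n), (S.card : ZMod 2) ≠ p → f S = 0}
  add_mem' := by intro f g hf hg S hS; simp [Pi.add_apply, hf S hS, hg S hS]
  zero_mem' := by intro S hS; rfl
  smul_mem' := by intro c f hf S hS; simp [Pi.smul_apply, hf S hS]

/-- The ℤ-homogeneous component of `Λ(n)` of degree `m` (zero unless `0 ≤ m ≤ n`). -/
def ldeg (m : ℤ) : Submodule ℂ (Lambda n) where
  carrier := {f | ∀ S : Finset (Fin n), (S.card : ℤ) ≠ m → f S = 0}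
  add_mem' := by intro f g hf hg S hS; simp [Pi.add_apply, hf S hS, hg S hS]
  zero_mem' := by intro S hS; rfl
  smul_mem' := by intro c f hf S hS; simp [Pi.smul_apply, hf S hS]

/-- Endomorphisms of `Λ(n)` that are ℤ₂-homogeneous of parity `p`. -/
def epar (p : ZMod 2) : Submodule ℂ (E n) where
  carrier := {D | ∀ (q : ZMod 2), ∀ f ∈ lpar n q, D f ∈ lpar n (q + p)}
  add_mem' := by
    intro D F hD hF q f hf
    simpa [LinearMap.add_apply] using (lpar n (q + p)).add_mem (hD q f hf) (hF q f hf)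
  zero_mem' := by intro q f hf; simpa using (lpar n (q + p)).zero_mem
  smul_mem' := by
    intro c D hD q f hf
    simpa [LinearMap.smul_apply] using (lpar n (q + p)).smul_mem c (hD q f hf)

/-- Endomorphisms of `Λ(n)` that are ℤ-homogeneous of degree `d`. -/
def edeg (d : ℤ) : Submodule ℂ (E n) where
  carrier := {D | ∀ (m : ℤ), ∀ f ∈ ldeg n m, D f ∈ ldeg n (m + d)}
  add_mem' := by
    intro D F hD hF m f hf
    simpa [LinearMap.add_apply] using (ldeg n (m + d)).add_mem (hD m f hf) (hF m f hf)
  zero_mem' := by intro m f hf; simpa using (ldeg n (m + d)).zero_mem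
  smul_mem' := by
    intro c D hD m f hf
    simpa [LinearMap.smul_apply] using (ldeg n (m + d)).smul_mem c (hD m f hf)

/-- The linear map `(f₁,…,f_n) ↦ ∑ᵢ fᵢ ∂ᵢ`. -/
def Wmap : (Fin n → Lambda n) →ₗ[ℂ] E n where
  toFun F := ∑ i, mulOp n (F i) * pd n i
  map_add' := by
    intro F G
    simp only [Pi.add_apply, map_add, add_mul, Finset.sum_add_distrib]
  map_smul' := by
    intro c F
    simp only [RingHom.id_apply, Pi.smul_apply, map_smul, smul_mul_assoc, Finset.smul_sum]

/-- The divergence `(f₁,…,f_n) ↦ ∑ᵢ ∂ᵢ(fᵢ)`. -/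
def divMap : (Fin n → Lambda n) →ₗ[ℂ] Lambda n where
  toFun F := ∑ i, pd n i (F i)
  map_add' := by
    intro F G
    simp only [Pi.add_apply, map_add, Finset.sum_add_distrib]
  map_smul' := by
    intro c F
    simp only [RingHom.id_apply, Pi.smul_apply, map_smul, Finset.smul_sum]

/-- The Witt type Lie superalgebra `W(n) = {∑ fᵢ∂ᵢ : fᵢ ∈ Λ(n)}`. -/
def Wn : Submodule ℂ (E n) := LinearMap.range (Wmap n)

/-- Divergence-free coefficient tuples. -/
def divFree : Submodule ℂ (Fin n → Lambda n) := LinearMap.ker (divMap n)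

/-- The special type Lie superalgebra `S(n) = {∑ fᵢ∂ᵢ : ∑ ∂ᵢ(fᵢ) = 0}`. -/
def Sn : Submodule ℂ (E n) := (divFree n).map (Wmap n)

/-- The top monomial `ω = x₁x₂⋯x_n`. -/
def omegaTop : Lambda n := mono n Finset.univ

/-- `1 − x₁x₂⋯x_n`. -/
def oneM : Lambda n := mono n ∅ - omegaTop n

/-- Multiplication of every coefficient by `1 − x₁⋯x_n`. -/
def oneMScale : (Fin n → Lambda n) →ₗ[ℂ] (Fin n → Lambda n) :=
  LinearMap.pi fun i => (mulOp n (oneM n)) ∘ₗ LinearMap.proj i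

/-- The Lie superalgebra `S̃(n) = {(1−x₁⋯x_n)∑ fᵢ∂ᵢ : ∑ ∂ᵢ(fᵢ) = 0}` (`n` even). -/
def Stn : Submodule ℂ (E n) := (divFree n).map (Wmap n ∘ₗ oneMScale n)

/-- The conjugate index `i'`. -/
def cidx (i : Fin n) : Fin n :=
  ⟨if i.val < n / 2 then i.val + n / 2 else if i.val < 2 * (n / 2) then i.val - n / 2 else i.val,
   by have := i.isLt; split_ifs <;> omega⟩

/-- The linear map `f ↦ D_H(f) = (−1)^{|f|} ∑ᵢ ∂ᵢ(f)∂_{i'}` (the sign is implemented by the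
parity operator `σ`, so that this is a single linear map agreeing with `D_H` on homogeneous
elements). -/
def DHmap : Lambda n →ₗ[ℂ] E n where
  toFun f := ∑ i, mulOp n (pd n i (par n f)) * pd n (cidx n i)
  map_add' := by
    intro f g
    simp only [map_add, add_mul, Finset.sum_add_distrib]
  map_smul' := by
    intro c f
    simp only [RingHom.id_apply, map_smul, smul_mul_assoc, Finset.smul_sum]

/-- Evaluation of the top coefficient. -/
def evalTop : Lambda n →ₗ[ℂ] ℂ := LinearMap.proj Finset.univ

/-- The Hamiltonian Lie superalgebra `H(n) = {D_H(f) : f ∈ ⊕_{i=0}^{n−1} Λ(n)_i}`. -/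
def Hn : Submodule ℂ (E n) := (LinearMap.ker (evalTop n)).map (DHmap n)

/-- `H̃(n) = {D_H(f) : f ∈ Λ(n)}`. -/
def HtN : Submodule ℂ (E n) := LinearMap.range (DHmap n)

/-- The degree derivation `𝒞 = ∑ᵢ xᵢ∂ᵢ`. -/
def CC : E n := ∑ i, mulOp n (mono n {i}) * pd n i

/-- The span of the diagonal elements `xᵢ∂ᵢ`. -/
def diagSpan : Submodule ℂ (E n) :=
  Submodule.span ℂ (Set.range fun i : Fin n => mulOp n (mono n {i}) * pd n i)

/-- The four families of Cartan type Lie superalgebras. -/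
inductive CT | W | S | St | H
deriving DecidableEq

/-- Validity of the parameter `n` for each family. -/
def CT.valid : CT → ℕ → Prop
  | .W, n => 4 ≤ n
  | .S, n => 4 ≤ n
  | .St, n => 4 ≤ n ∧ Even n
  | .H, n => 4 < n

/-- The Cartan type Lie superalgebra `L` itself. -/
def CT.algebra : CT → (n : ℕ) → Submodule ℂ (E n)
  | .W, n => Wn n
  | .S, n => Sn n
  | .St, n => Stn n
  | .H, n => Hn n

/-- The extended algebra `L'`: `L' = L` for `W(n)` and `S̃(n)`, `L' = S(n) ⊕ ℂ𝒞` for `S(n)`,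
and `L' = H̃(n) ⊕ ℂ𝒞` for `H(n)`. -/
def CT.prime : CT → (n : ℕ) → Submodule ℂ (E n)
  | .W, n => Wn n
  | .S, n => Sn n ⊔ Submodule.span ℂ {CC n}
  | .St, n => Stn n
  | .H, n => HtN n ⊔ Submodule.span ℂ {CC n}

/-- The top degree `ξ_L` of the ℤ-grading. -/
def CT.xi : CT → (n : ℕ) → ℤ
  | .W, n => (n : ℤ) - 1
  | .S, n => (n : ℤ) - 2
  | .St, n => (n : ℤ) - 2
  | .H, n => (n : ℤ) - 3

/-- The ℤ-grading component `L_j = L ∩ W(n)_j`; for `S̃(n)` the component of degree `−1`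
is `span{(1−x₁⋯x_n)∂ᵢ}` instead. -/
def CT.grade (t : CT) (n : ℕ) (j : ℤ) : Submodule ℂ (E n) :=
  match t with
  | .St =>
      if j = -1 then
        Submodule.span ℂ (Set.range fun i : Fin n => mulOp n (oneM n) * pd n i)
      else Stn n ⊓ edeg n j
  | t => t.algebra n ⊓ edeg n j

/-- The ℤ-grading component `L'_j` of the extended algebra `L'`. -/
def CT.grade' (t : CT) (n : ℕ) (j : ℤ) : Submodule ℂ (E n) :=
  match t with
  | .St => CT.grade .St n j
  | t => t.prime n ⊓ edeg n j

/-- The standard Cartan subalgebra `H_L` of `L`: the part of the diagonal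
`span{xᵢ∂ᵢ}` lying in `L`. -/
def CT.cartan (t : CT) (n : ℕ) : Submodule ℂ (E n) := t.algebra n ⊓ diagSpan n

/-- The weight space of `M ⊆ End Λ(n)` of weight `μ ∈ H_L^*` under the adjoint action
of the standard Cartan subalgebra of `L`. -/
def wtsp (t : CT) (n : ℕ) (M : Submodule ℂ (E n)) (μ : Module.Dual ℂ (t.cartan n)) :
    Submodule ℂ (E n) where
  carrier := {x | x ∈ M ∧ ∀ h : t.cartan n, sbL n h x = μ h • x}
  add_mem' := by
    rintro x y ⟨hx, hx'⟩ ⟨hy, hy'⟩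
    exact ⟨M.add_mem hx hy, fun h => by simp [map_add, hx' h, hy' h, smul_add]⟩
  zero_mem' := ⟨M.zero_mem, fun h => by simp⟩
  smul_mem' := by
    rintro c x ⟨hx, hx'⟩
    exact ⟨M.smul_mem c hx, fun h => by simp [map_smul, hx' h, smul_comm c]⟩

/-- The set of roots of `M` with respect to the standard Cartan subalgebra of `L`:
the nonzero weights with nonzero weight space. -/
def CT.roots (t : CT) (n : ℕ) (M : Submodule ℂ (E n)) : Set (Module.Dual ℂ (t.cartan n)) :=
  {ε | ε ≠ 0 ∧ wtsp t n M ε ≠ ⊥}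

/-- The sign `(−1)^p` for `p ∈ ℤ₂`. -/
def sgn (p : ZMod 2) : ℂ := (-1 : ℂ) ^ p.val

/-- `f` is a super-biderivation of `L` of ℤ₂-degree `pf`:
a bilinear map with `f(L_α, L_β) ⊆ L_{α+β+pf}` satisfying
`f([x,y],z) = (−1)^{|x||f|}[x,f(y,z)] + (−1)^{|y||z|}[f(x,z),y]` and
`f(x,[y,z]) = [f(x,y),z] + (−1)^{(|f|+|x|)|y|}[y,f(x,z)]` for homogeneous `x,y,z ∈ L`.
(The bilinear map is given as a bilinear map on the ambient space `End Λ(n)`;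
only its restriction to `L` is relevant.) -/
structure IsSuperBider (L : Submodule ℂ (E n)) (pf : ZMod 2)
    (f : E n →ₗ[ℂ] E n →ₗ[ℂ] E n) : Prop where
  maps : ∀ (α β : ZMod 2), ∀ x ∈ L ⊓ epar n α, ∀ y ∈ L ⊓ epar n β,
    f x y ∈ L ⊓ epar n (α + β + pf)
  eq1 : ∀ (α β γ : ZMod 2), ∀ x ∈ L ⊓ epar n α, ∀ y ∈ L ⊓ epar n β, ∀ z ∈ L ⊓ epar n γ,
    f (sbL n x y) z = sgn (α * pf) • sbL n x (f y z) + sgn (β * γ) • sbL n (f x z) y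
  eq2 : ∀ (α β γ : ZMod 2), ∀ x ∈ L ⊓ epar n α, ∀ y ∈ L ⊓ epar n β, ∀ z ∈ L ⊓ epar n γ,
    f x (sbL n y z) = sbL n (f x y) z + sgn ((pf + α) * β) • sbL n y (f x z)

/-- `D` is a superderivation of `L` of ℤ₂-degree `p`:
`D(L_α) ⊆ L_{α+p}` and `D([x,y]) = [D(x),y] + (−1)^{|D||x|}[x,D(y)]` for homogeneous
`x, y ∈ L`. (Given as a linear map on the ambient space `End Λ(n)`.) -/
structure IsSuperDer (L : Submodule ℂ (E n)) (p : ZMod 2)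
    (D : E n →ₗ[ℂ] E n) : Prop where
  maps : ∀ (α : ZMod 2), ∀ x ∈ L ⊓ epar n α, D x ∈ L ⊓ epar n (α + p)
  leib : ∀ (α β : ZMod 2), ∀ x ∈ L ⊓ epar n α, ∀ y ∈ L ⊓ epar n β,
    D (sbL n x y) = sbL n (D x) y + sgn (p * α) • sbL n x (D y)

/-- `f ∈ BDer(L)_ε`: the super-biderivation `f` has weight `ε ∈ H_L^*`, i.e.
`f(L_η, L_ζ) ⊆ L_{ε+η+ζ}` for all weights `η, ζ`. -/
def CT.HasWeight (t : CT) (n : ℕ) (f : E n →ₗ[ℂ] E n →ₗ[ℂ] E n)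
    (ε : Module.Dual ℂ (t.cartan n)) : Prop :=
  ∀ (η ζ : Module.Dual ℂ (t.cartan n)),
    ∀ x ∈ wtsp t n (t.algebra n) η, ∀ y ∈ wtsp t n (t.algebra n) ζ,
      f x y ∈ wtsp t n (t.algebra n) (ε + η + ζ)

/-- `f ∈ BDer(L)_i`: the super-biderivation `f` has ℤ-degree `i`, i.e.
`f(L_j, L_k) ⊆ L_{i+j+k}` for all `j, k ∈ ℤ`. -/
def CT.HasDeg (t : CT) (n : ℕ) (f : E n →ₗ[ℂ] E n →ₗ[ℂ] E n) (i : ℤ) : Prop :=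
  ∀ (j k : ℤ), ∀ x ∈ t.grade n j, ∀ y ∈ t.grade n k, f x y ∈ t.grade n (i + j + k)


/-! ### Elementary operators -/

/-- Left multiplication by `x_i`. -/
def ax (i : Fin n) : E n := mulOp n (mono n {i})

/-- The sign of moving `x_i` past the smaller elements of `U`. -/
def sg (i : Fin n) (U : Finset (Fin n)) : ℂ := msign (U.filter (· < i)).card

variable {n}

lemma negE_mul (x y : E n) : -x * y = -(x * y) := by
  apply LinearMap.ext; intro f; simp

lemma mul_negE (x y : E n) : x * -y = -(x * y) := by
  apply LinearMap.ext; intro f; simp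

lemma msign_mul_self (k : ℕ) : msign k * msign k = 1 := by
  unfold msign; rw [← mul_pow]; simp

lemma msign_add (k l : ℕ) : msign (k + l) = msign k * msign l := pow_add _ _ _

lemma msign_succ (k : ℕ) : msign (k + 1) = - msign k := by simp [msign, pow_succ]

lemma msign_ne (k : ℕ) : msign k ≠ 0 := by simp [msign]

lemma sg_mul_self (i : Fin n) (U : Finset (Fin n)) : sg n i U * sg n i U = 1 := msign_mul_self _

lemma sg_ne (i : Fin n) (U : Finset (Fin n)) : sg n i U ≠ 0 := msign_ne _

lemma sg_insert (i j : Fin n) (U : Finset (Fin n)) (h : j ∉ U) :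
    sg n i (insert j U) = if j < i then - sg n i U else sg n i U := by
  unfold sg
  rw [Finset.filter_insert]
  split_ifs with h1
  · rw [Finset.card_insert_of_notMem (by simp [h]), msign_succ]
  · rfl

lemma sg_erase (i j : Fin n) (U : Finset (Fin n)) (h : j ∈ U) :
    sg n i (U.erase j) = if j < i then - sg n i U else sg n i U := by
  have := sg_insert i j (U.erase j) (by simp)
  rw [Finset.insert_erase h] at this
  rw [this]; split_ifs <;> simp

lemma ax_apply (i : Fin n) (g : Lambda n) (U : Finset (Fin n)) :
    ax n i g U = if i ∈ U then sg n i U * g (U.erase i) else 0 := by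
  show lmulFun n (mono n {i}) g U = _
  unfold lmulFun mono
  split_ifs with h
  · rw [Finset.sum_eq_single {i}]
    · have : inversions n {i} (U \ {i}) = (U.filter (· < i)).card := by
        unfold inversions
        rw [← Finset.card_map (s := U.filter (· < i)) ⟨fun x : Fin n => (i, x), fun x y h => by simpa using h⟩]
        congr 1
        ext ⟨p, q⟩
        simp only [Finset.mem_filter, Finset.mem_product, Finset.mem_singleton, Finset.mem_sdiff,
          Finset.mem_map, Function.Embedding.coeFn_mk, Prod.mk.injEq]
        constructor
        · rintro ⟨⟨rfl, h1, h2⟩, h3⟩; exact ⟨q, ⟨h1, h3⟩, rfl⟩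
        · rintro ⟨a, ⟨h1, h2⟩, rfl, rfl⟩
          exact ⟨⟨rfl, h1, ne_of_lt h2⟩, h2⟩
      rw [this]; simp [sg, Finset.sdiff_singleton_eq_erase]
    · intro S _ hS; simp [hS]
    · intro hS; simp [h] at hS
  · apply Finset.sum_eq_zero
    intro S hS
    rw [if_neg]; · simp
    rintro rfl; simp at hS; exact h hS

lemma pd_apply (i : Fin n) (g : Lambda n) (U : Finset (Fin n)) :
    pd n i g U = if i ∈ U then 0 else sg n i U * g (insert i U) := rfl

lemma par_apply (g : Lambda n) (U : Finset (Fin n)) :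
    par n g U = msign U.card * g U := rfl

lemma ax_ax (i j : Fin n) : ax n i * ax n j = - (ax n j * ax n i) := by
  apply LinearMap.ext; intro f; funext U
  simp only [Module.End.mul_apply, LinearMap.neg_apply, Pi.neg_apply, ax_apply, Finset.mem_erase]
  by_cases hij : i = j
  · subst hij; simp
  by_cases hi : i ∈ U <;> by_cases hj : j ∈ U <;> simp only [hi, hj, and_true, and_false, if_true, if_false, ne_eq, hij, Ne.symm hij, not_false_eq_true, mul_zero, neg_zero]
  rw [sg_erase _ _ _ hi, sg_erase _ _ _ hj, Finset.erase_right_comm]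
  rcases lt_or_gt_of_ne hij with h | h <;> simp [h, not_lt_of_gt h] <;> ring

lemma pd_pd (i j : Fin n) : pd n i * pd n j = - (pd n j * pd n i) := by
  apply LinearMap.ext; intro f; funext U
  simp only [Module.End.mul_apply, LinearMap.neg_apply, Pi.neg_apply, pd_apply, Finset.mem_insert]
  by_cases hij : i = j
  · subst hij; simp
  by_cases hi : i ∈ U <;> by_cases hj : j ∈ U <;> simp only [hi, hj, or_true, or_false, if_true, if_false, hij, mul_zero, neg_zero]
  rw [if_neg (Ne.symm hij), sg_insert _ _ _ hi, sg_insert _ _ _ hj, Finset.insert_comm]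
  rcases lt_or_gt_of_ne hij with h | h <;> simp [h, not_lt_of_gt h] <;> ring

lemma pd_ax_ne (i j : Fin n) (hij : i ≠ j) : pd n i * ax n j = - (ax n j * pd n i) := by
  apply LinearMap.ext; intro f; funext U
  simp only [Module.End.mul_apply, LinearMap.neg_apply, Pi.neg_apply, pd_apply, ax_apply,
    Finset.mem_insert, Finset.mem_erase]
  by_cases hi : i ∈ U <;> by_cases hj : j ∈ U <;>
    simp only [hi, hj, hij, Ne.symm hij, and_true, and_false, or_true, or_false, if_true, if_false, mul_zero, neg_zero, ne_eq, not_false_eq_true]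
  rw [sg_insert _ _ _ hi, sg_erase _ _ _ hj, Finset.erase_insert_of_ne hij]
  rcases lt_or_gt_of_ne hij with h | h <;> simp [h, not_lt_of_gt h] <;> ring

lemma pd_ax_self (i : Fin n) : pd n i * ax n i = 1 - ax n i * pd n i := by
  apply LinearMap.ext; intro f; funext U
  simp only [Module.End.mul_apply, LinearMap.sub_apply, Pi.sub_apply, pd_apply, ax_apply,
    Finset.mem_insert, Finset.mem_erase, Module.End.one_apply]
  by_cases hi : i ∈ U
  · simp only [hi, if_true, ne_eq, not_true, false_and, if_false, sg_erase, lt_irrefl,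
      Finset.insert_erase, ← mul_assoc, sg_mul_self]; ring
  · simp [hi, sg_insert, ← mul_assoc, sg_mul_self]

lemma par_par : par n * par n = 1 := by
  apply LinearMap.ext; intro f; funext U
  simp [par_apply, ← mul_assoc, msign_mul_self]

lemma par_ax (i : Fin n) : par n * ax n i = - (ax n i * par n) := by
  apply LinearMap.ext; intro f; funext U
  simp only [Module.End.mul_apply, LinearMap.neg_apply, Pi.neg_apply, par_apply, ax_apply]
  split_ifs with h
  · rw [← Finset.card_erase_add_one h, msign_succ]; ring
  · simp

lemma par_pd (i : Fin n) : par n * pd n i = - (pd n i * par n) := by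
  apply LinearMap.ext; intro f; funext U
  simp only [Module.End.mul_apply, LinearMap.neg_apply, Pi.neg_apply, par_apply, pd_apply]
  split_ifs with h
  · simp
  · rw [Finset.card_insert_of_notMem h, msign_succ]; ring

lemma par_mono (S : Finset (Fin n)) : par n (mono n S) = msign S.card • mono n S := by
  funext U; simp only [par_apply, mono, Pi.smul_apply, smul_eq_mul]
  split_ifs with h
  · rw [h]
  · simp

lemma ax_mono (i : Fin n) (S : Finset (Fin n)) :
    ax n i (mono n S) = if i ∈ S then 0 else sg n i S • mono n (insert i S) := by
  funext U
  rw [ax_apply]; unfold mono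
  by_cases hS : i ∈ S
  · simp only [hS, if_true, Pi.zero_apply]
    rw [if_neg (show ¬ U.erase i = S by rintro rfl; simp at hS)]; simp
  · simp only [hS, if_false, Pi.smul_apply, smul_eq_mul]
    by_cases hU : U = insert i S
    · subst hU; simp [hS, sg_insert]
    · rw [if_neg hU]
      split_ifs with h1 h2
      · exact absurd (by rw [← h2, Finset.insert_erase h1]) hU
      · simp
      · simp

lemma pd_mono (i : Fin n) (S : Finset (Fin n)) :
    pd n i (mono n S) = if i ∈ S then sg n i S • mono n (S.erase i) else 0 := by
  funext U
  rw [pd_apply]; unfold mono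
  by_cases hS : i ∈ S
  · simp only [hS, if_true, Pi.smul_apply, smul_eq_mul]
    by_cases hU : U = S.erase i
    · subst hU; simp [hS, sg_erase]
    · rw [if_neg hU]
      split_ifs with h1 h2
      · simp
      · exact absurd (by rw [← h2, Finset.erase_insert h1]) hU
      · simp
  · simp only [hS, if_false, Pi.zero_apply]
    rw [if_neg (show ¬ insert i U = S by rintro rfl; simp at hS)]; simp

lemma Lambda_eq_sum (f : Lambda n) : f = ∑ S, f S • mono n S := by
  funext U; simp [mono, Finset.sum_apply]

lemma lambda_ind {p : Lambda n → Prop} (h0 : p 0) (hadd : ∀ f g, p f → p g → p (f + g))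
    (hsm : ∀ (c : ℂ) f, p f → p (c • f)) (h1 : p (mono n ∅))
    (ha : ∀ i f, p f → p (ax n i f)) (f : Lambda n) : p f := by
  have hm : ∀ S, p (mono n S) := by
    intro S
    induction S using Finset.induction_on with
    | empty => exact h1
    | insert i S hi ih =>
      have := ax_mono i S
      rw [if_neg hi] at this
      have h2 : mono n (insert i S) = sg n i S • ax n i (mono n S) := by
        rw [this, smul_smul, sg_mul_self, one_smul]
      rw [h2]; exact hsm _ _ (ha _ _ ih)
  rw [Lambda_eq_sum f]
  exact Finset.sum_induction _ p hadd h0 (fun S _ => hsm _ _ (hm S))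

lemma mulOp_one : mulOp n (mono n ∅) = 1 := by
  apply LinearMap.ext; intro g; funext U
  show lmulFun n (mono n ∅) g U = _
  unfold lmulFun mono
  rw [Finset.sum_eq_single ∅]
  · simp [inversions, msign]
  · intro S _ hS; simp [hS]
  · simp

lemma mulOp_ax (i : Fin n) (g : Lambda n) : mulOp n (ax n i g) = ax n i * mulOp n g := by
  apply LinearMap.ext; intro h; funext U
  rw [Module.End.mul_apply, ax_apply]
  show lmulFun n (ax n i g) h U = if i ∈ U then sg n i U * lmulFun n g h (U.erase i) else 0
  unfold lmulFun
  split_ifs with hU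
  · rw [Finset.mul_sum]
    conv_lhs => rw [← Finset.insert_erase hU]
    rw [Finset.sum_powerset_insert (by simp)]
    rw [Finset.sum_eq_zero, zero_add]
    · refine Finset.sum_congr rfl fun S hS => ?_
      rw [Finset.mem_powerset] at hS
      have hiS : i ∉ S := fun h => by simpa using hS h
      have e : insert i (U.erase i) \ insert i S = U.erase i \ S := by
        ext x; simp only [Finset.mem_sdiff, Finset.mem_insert, Finset.mem_erase]; grind
      rw [e, ax_apply, if_pos (by simp), Finset.erase_insert hiS, sg_insert _ _ _ hiS, if_neg (lt_irrefl _)]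
      have e2 : inversions n (insert i S) (U.erase i \ S) =
          ((U.erase i \ S).filter (· < i)).card + inversions n S (U.erase i \ S) := by
        unfold inversions
        rw [← Finset.card_map (s := (U.erase i \ S).filter (· < i)) ⟨fun x : Fin n => (i, x), fun x y h => by simpa using h⟩,
          ← Finset.card_union_of_disjoint]
        · congr 1
          ext ⟨p, q⟩
          simp only [Finset.mem_filter, Finset.mem_product, Finset.mem_union, Finset.mem_insert,
            Finset.mem_map, Function.Embedding.coeFn_mk, Prod.mk.injEq]
          constructor
          · rintro ⟨⟨rfl | h1, h2⟩, h3⟩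
            · left; exact ⟨q, ⟨h2, h3⟩, rfl⟩
            · right; exact ⟨⟨h1, h2⟩, h3⟩
          · rintro (⟨a, ⟨h1, h2⟩, rfl, rfl⟩ | ⟨⟨h1, h2⟩, h3⟩)
            · exact ⟨⟨Or.inl rfl, h1⟩, h2⟩
            · exact ⟨⟨Or.inr h1, h2⟩, h3⟩
        · rw [Finset.disjoint_left]
          rintro ⟨p, q⟩ h1 h2
          simp only [Finset.mem_map, Function.Embedding.coeFn_mk, Prod.mk.injEq,
            Finset.mem_filter, Finset.mem_product] at h1 h2
          obtain ⟨a, -, rfl, -⟩ := h1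
          exact hiS h2.1.1
      have e3 : sg n i U = msign ((U.erase i \ S).filter (· < i)).card * sg n i S := by
        unfold sg
        rw [← msign_add, ← Finset.card_union_of_disjoint]
        · congr 2
          ext x
          simp only [Finset.mem_filter, Finset.mem_union, Finset.mem_sdiff, Finset.mem_erase]
          have := @hS x
          simp only [Finset.mem_erase] at this
          have h4 : x < i → x ≠ i := ne_of_lt
          tauto
        · rw [Finset.disjoint_left]; intro x; simp; tauto
      rw [e2, e3, msign_add]; ring
    · intro S hS
      rw [Finset.mem_powerset] at hS
      have hiS : i ∉ S := fun h => by simpa using hS h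
      rw [ax_apply, if_neg hiS]; simp
  · apply Finset.sum_eq_zero
    intro S hS
    rw [Finset.mem_powerset] at hS
    rw [ax_apply, if_neg (fun h => hU (hS h))]; simp

lemma pd_one (i : Fin n) : pd n i (mono n ∅) = 0 := by rw [pd_mono]; simp

lemma par_one : par n (mono n ∅) = mono n ∅ := by rw [par_mono]; simp [msign]

lemma pd_ax_apply_ne {i j : Fin n} (h : i ≠ j) (g : Lambda n) :
    pd n i (ax n j g) = - ax n j (pd n i g) := by
  have := LinearMap.congr_fun (pd_ax_ne i j h) g
  simpa using this

lemma pd_ax_apply (i : Fin n) (g : Lambda n) :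
    pd n i (ax n i g) = g - ax n i (pd n i g) := by
  have := LinearMap.congr_fun (pd_ax_self i) g
  simpa using this

lemma par_ax_apply (i : Fin n) (g : Lambda n) : par n (ax n i g) = - ax n i (par n g) := by
  have := LinearMap.congr_fun (par_ax i) g
  simpa using this

lemma par_pd_apply (i : Fin n) (g : Lambda n) : par n (pd n i g) = - pd n i (par n g) := by
  have := LinearMap.congr_fun (par_pd i) g
  simpa using this

lemma pd_pd_apply (i j : Fin n) (g : Lambda n) : pd n i (pd n j g) = - pd n j (pd n i g) := by
  have := LinearMap.congr_fun (pd_pd i j) g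
  simpa using this

lemma par_par_apply (g : Lambda n) : par n (par n g) = g := by
  have := LinearMap.congr_fun (par_par (n := n)) g
  simpa using this

lemma pd_mulOp (i : Fin n) (f : Lambda n) :
    pd n i * mulOp n f = mulOp n (pd n i f) + mulOp n (par n f) * pd n i := by
  induction f using lambda_ind with
  | h0 => simp
  | hadd f g hf hg => simp only [map_add, mul_add, add_mul, hf, hg]; abel
  | hsm c f hf => simp only [map_smul, mul_smul_comm, smul_mul_assoc, hf, smul_add]
  | h1 => rw [pd_one, par_one, mulOp_one]; simp
  | ha j f hf =>
    rw [par_ax_apply, map_neg, mulOp_ax, mulOp_ax, ← mul_assoc]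
    by_cases hij : i = j
    · subst hij
      rw [pd_ax_apply, pd_ax_self, map_sub, mulOp_ax, sub_mul, mul_assoc, hf]
      simp only [negE_mul, mul_negE, mul_add, add_mul, sub_mul, mul_assoc, one_mul, neg_neg] <;> abel
    · rw [pd_ax_apply_ne hij, pd_ax_ne _ _ hij, map_neg, mulOp_ax, negE_mul, mul_assoc, hf]
      simp only [negE_mul, mul_negE, mul_add, add_mul, sub_mul, mul_assoc, one_mul, neg_neg] <;> abel

lemma par_mulOp (f : Lambda n) : par n * mulOp n f = mulOp n (par n f) * par n := by
  induction f using lambda_ind with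
  | h0 => simp
  | hadd f g hf hg => simp only [map_add, mul_add, add_mul, hf, hg]
  | hsm c f hf => simp only [map_smul, mul_smul_comm, smul_mul_assoc, hf]
  | h1 => rw [par_one, mulOp_one]; simp
  | ha j f hf =>
    rw [par_ax_apply, map_neg, mulOp_ax, mulOp_ax, ← mul_assoc, par_ax, negE_mul, mul_assoc, hf]
    simp only [negE_mul, mul_negE, mul_add, add_mul, sub_mul, mul_assoc, one_mul, neg_neg] <;> abel

lemma mulOp_mul_ax (f : Lambda n) (i : Fin n) : mulOp n f * ax n i = ax n i * mulOp n (par n f) := by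
  induction f using lambda_ind with
  | h0 => simp
  | hadd f g hf hg => simp only [map_add, mul_add, add_mul, hf, hg]
  | hsm c f hf => simp only [map_smul, mul_smul_comm, smul_mul_assoc, hf]
  | h1 => rw [par_one, mulOp_one]; simp
  | ha j f hf =>
    rw [par_ax_apply, map_neg, mulOp_ax, mulOp_ax, mul_assoc, hf, ← mul_assoc, ax_ax j i]
    simp only [negE_mul, mul_negE, mul_add, add_mul, sub_mul, mul_assoc, one_mul, neg_neg] <;> abel

lemma mulOp_mulOp (f g : Lambda n) : mulOp n (mulOp n f g) = mulOp n f * mulOp n g := by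
  induction f using lambda_ind with
  | h0 => simp
  | hadd f g hf hg => simp only [map_add, add_mul, hf, hg, LinearMap.add_apply]
  | hsm c f hf => simp only [map_smul, smul_mul_assoc, hf, LinearMap.smul_apply]
  | h1 => rw [mulOp_one]; simp
  | ha j f hf =>
    rw [mulOp_ax, Module.End.mul_apply, mulOp_ax, hf, mul_assoc]

lemma mulOp_apply_one (f : Lambda n) : mulOp n f (mono n ∅) = f := by
  induction f using lambda_ind with
  | h0 => simp
  | hadd f g hf hg => simp only [map_add, hf, hg, LinearMap.add_apply]
  | hsm c f hf => simp only [map_smul, hf, LinearMap.smul_apply]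
  | h1 => rw [mulOp_one]; simp
  | ha j f hf =>
    rw [mulOp_ax, Module.End.mul_apply, hf]

/-- Even elements are central, odd ones super-commute. -/
lemma mulOp_comm_even (g : Lambda n) (hg : par n g = g) (f : Lambda n) :
    mulOp n g * mulOp n f = mulOp n f * mulOp n g := by
  induction f using lambda_ind with
  | h0 => simp
  | hadd f g hf hg => simp only [map_add, mul_add, add_mul, hf, hg]
  | hsm c f hf => simp only [map_smul, mul_smul_comm, smul_mul_assoc, hf]
  | h1 => rw [mulOp_one]; simp
  | ha j f hf =>
    rw [mulOp_ax, ← mul_assoc, mulOp_mul_ax, hg, mul_assoc, hf, mul_assoc]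

lemma mulOp_comm_odd (g : Lambda n) (hg : par n g = -g) (f : Lambda n) :
    mulOp n g * mulOp n f = mulOp n (par n f) * mulOp n g := by
  induction f using lambda_ind with
  | h0 => simp
  | hadd f g hf hg => simp only [map_add, mul_add, add_mul, hf, hg]
  | hsm c f hf => simp only [map_smul, mul_smul_comm, smul_mul_assoc, hf]
  | h1 => rw [par_one, mulOp_one]; simp
  | ha j f hf =>
    rw [mulOp_ax, ← mul_assoc, mulOp_mul_ax, hg, mul_assoc, map_neg, negE_mul, hf, par_ax_apply,
      map_neg, mulOp_ax]
    simp only [negE_mul, mul_negE, mul_add, add_mul, sub_mul, mul_assoc, one_mul, neg_neg] <;> abel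

/-! ### Vector fields and brackets -/

/-- The vector field `f ∂_i`. -/
def V (f : Lambda n) (i : Fin n) : E n := mulOp n f * pd n i

lemma V_add (f g : Lambda n) (i : Fin n) : V (f + g) i = V f i + V g i := by
  simp [V, add_mul]

lemma V_smul (c : ℂ) (f : Lambda n) (i : Fin n) : V (c • f) i = c • V f i := by
  simp [V, smul_mul_assoc]

lemma V_zero (i : Fin n) : V (0 : Lambda n) i = 0 := by simp [V]

lemma V_neg (f : Lambda n) (i : Fin n) : V (-f) i = - V f i := by
  have h : V (-f) i + V f i = 0 := by rw [← V_add, neg_add_cancel, V_zero]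
  exact eq_neg_of_add_eq_zero_left h

lemma V_sum {ι : Type*} (s : Finset ι) (f : ι → Lambda n) (i : Fin n) :
    V (∑ x ∈ s, f x) i = ∑ x ∈ s, V (f x) i := by
  simp [V, Finset.sum_mul]

lemma par_V (f : Lambda n) (i : Fin n) : par n * V f i * par n = - V (par n f) i := by
  unfold V
  rw [← mul_assoc, par_mulOp, mul_assoc (mulOp n (par n f)), par_pd, mul_negE, negE_mul, mul_assoc,
    mul_assoc, par_par, mul_one]

lemma V_mul_V (f g : Lambda n) (i j : Fin n) :
    V f i * V g j = V (mulOp n f (pd n i g)) j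
      + mulOp n f * mulOp n (par n g) * (pd n i * pd n j) := by
  unfold V
  rw [mul_assoc, ← mul_assoc (pd n i), pd_mulOp, mulOp_mulOp]
  simp only [mul_add, add_mul, mul_assoc]

lemma lambda_split (g : Lambda n) :
    ∃ g0 g1, par n g0 = g0 ∧ par n g1 = -g1 ∧ g = g0 + g1 := by
  refine ⟨(2:ℂ)⁻¹ • (g + par n g), (2:ℂ)⁻¹ • (g - par n g), ?_, ?_, ?_⟩
  · rw [map_smul, map_add, par_par_apply, add_comm]
  · rw [map_smul, map_sub, par_par_apply, ← smul_neg, neg_sub]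
  · module

lemma sb_even (D F : E n) (h : par n * F * par n = -F) :
    sbL n D F = D * F - F * (par n * D * par n) := by
  show sbFun n D F = _
  unfold sbFun
  rw [h, add_neg_cancel, zero_mul, zero_add, sub_neg_eq_add, ← two_smul ℂ F, smul_mul_assoc,
    smul_smul]
  norm_num

lemma sb_odd (D F : E n) (h : par n * F * par n = F) :
    sbL n D F = D * F - F * D := by
  show sbFun n D F = _
  unfold sbFun
  rw [h, sub_self, zero_mul, add_zero, ← two_smul ℂ F, smul_mul_assoc, smul_smul]
  norm_num

lemma sb_V_even (f g : Lambda n) (i j : Fin n) (hg : par n g = g) :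
    sbL n (V f i) (V g j) = V (mulOp n f (pd n i g)) j + V (mulOp n (pd n j (par n f)) g) i := by
  rw [sb_even _ _ (by rw [par_V, hg]), par_V, mul_negE, sub_neg_eq_add, V_mul_V, V_mul_V, hg,
    par_par_apply, pd_pd j i]
  have h2 : mulOp n g (pd n j (par n f)) = mulOp n (pd n j (par n f)) g := by
    have := LinearMap.congr_fun (mulOp_comm_even g hg (pd n j (par n f))) (mono n ∅)
    simpa only [Module.End.mul_apply, mulOp_apply_one] using this
  rw [h2, mulOp_comm_even g hg f, mul_negE]
  abel

lemma sb_V_odd (f g : Lambda n) (i j : Fin n) (hg : par n g = -g) :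
    sbL n (V f i) (V g j) = V (mulOp n f (pd n i g)) j + V (mulOp n (pd n j (par n f)) g) i := by
  rw [sb_odd _ _ (by rw [par_V, hg, V_neg, neg_neg]), V_mul_V, V_mul_V, hg, pd_pd j i]
  have h2 : mulOp n g (pd n j f) = - mulOp n (pd n j (par n f)) g := by
    have := LinearMap.congr_fun (mulOp_comm_odd g hg (pd n j f)) (mono n ∅)
    simp only [Module.End.mul_apply, mulOp_apply_one] at this
    rw [this, par_pd_apply, map_neg, LinearMap.neg_apply]
  rw [h2, mulOp_comm_odd g hg (par n f), par_par_apply, mul_negE, V_neg, map_neg, mul_negE,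
    negE_mul]
  abel

lemma sb_V (f g : Lambda n) (i j : Fin n) :
    sbL n (V f i) (V g j) = V (mulOp n f (pd n i g)) j + V (mulOp n (pd n j (par n f)) g) i := by
  obtain ⟨g0, g1, h0, h1, rfl⟩ := lambda_split g
  rw [V_add, map_add, sb_V_even f g0 i j h0, sb_V_odd f g1 i j h1]
  simp only [map_add, V_add]
  abel

lemma mulOp_mono_mono_disj (S T : Finset (Fin n)) (h : Disjoint S T) :
    mulOp n (mono n S) (mono n T) = msign (inversions n S T) • mono n (S ∪ T) := by
  funext U
  show lmulFun n (mono n S) (mono n T) U = _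
  unfold lmulFun
  by_cases hU : U = S ∪ T
  · subst hU
    have e : (S ∪ T) \ S = T := by
      rw [Finset.union_sdiff_left, Finset.sdiff_eq_self_iff_disjoint]; exact h.symm
    rw [Finset.sum_eq_single S]
    · rw [e]; simp [mono]
    · intro S' _ h'; simp [mono, h']
    · intro h'; exact absurd (Finset.mem_powerset.2 Finset.subset_union_left) h'
  · rw [Finset.sum_eq_zero]
    · simp [mono, hU]
    · intro S' hS'
      rw [Finset.mem_powerset] at hS'
      by_cases h1 : S' = S
      · subst h1
        have : U \ S' ≠ T := by
          rintro rfl; apply hU; rw [Finset.union_sdiff_of_subset hS']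
        simp [mono, this]
      · simp [mono, h1]

lemma mulOp_mono_mono_zero (S T : Finset (Fin n)) (h : ¬ Disjoint S T) :
    mulOp n (mono n S) (mono n T) = 0 := by
  funext U
  show lmulFun n (mono n S) (mono n T) U = _
  unfold lmulFun
  rw [Finset.sum_eq_zero]
  · rfl
  · intro S' hS'
    by_cases h1 : S' = S
    · subst h1
      have : U \ S' ≠ T := by
        rintro rfl; exact h Finset.disjoint_sdiff
      simp [mono, this]
    · simp [mono, h1]

lemma mono_insert (i : Fin n) (S : Finset (Fin n)) (h : i ∉ S) :
    mono n (insert i S) = sg n i S • ax n i (mono n S) := by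
  rw [ax_mono, if_neg h, smul_smul, sg_mul_self, one_smul]

/-! ### Degrees -/

lemma edeg_mul {D F : E n} {a b : ℤ} (hD : D ∈ edeg n a) (hF : F ∈ edeg n b) :
    D * F ∈ edeg n (a + b) := by
  intro m f hf
  have := hD _ _ (hF m f hf)
  rwa [show m + (a + b) = m + b + a by ring]

lemma ax_mem (i : Fin n) : ax n i ∈ edeg n 1 := by
  intro m f hf U hU
  rw [ax_apply]
  split_ifs with h
  · rw [hf, mul_zero]
    rw [Finset.card_erase_of_mem h]
    have := Finset.card_pos.2 ⟨i, h⟩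
    intro h2; apply hU; omega
  · rfl

lemma pd_mem (i : Fin n) : pd n i ∈ edeg n (-1) := by
  intro m f hf U hU
  rw [pd_apply]
  split_ifs with h
  · rfl
  · rw [hf, mul_zero]
    rw [Finset.card_insert_of_notMem h]
    intro h2; apply hU; push_cast at h2; omega

lemma mulOp_mem (S : Finset (Fin n)) : mulOp n (mono n S) ∈ edeg n S.card := by
  induction S using Finset.induction_on with
  | empty => rw [mulOp_one]; intro m f hf; simpa using hf
  | insert i S hi ih =>
    rw [mono_insert i S hi, map_smul, mulOp_ax, Finset.card_insert_of_notMem hi]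
    apply Submodule.smul_mem
    have := edeg_mul (ax_mem i) ih
    push_cast
    rwa [add_comm]

lemma V_mem (S : Finset (Fin n)) (k : Fin n) (d : ℤ) (hd : d = S.card - 1) :
    V (mono n S) k ∈ edeg n d := by
  have h : V (mono n S) k ∈ edeg n ((S.card : ℤ) + -1) := edeg_mul (mulOp_mem S) (pd_mem k)
  rwa [show d = (S.card : ℤ) + -1 by rw [hd]; ring]

lemma V_ax_mem (i : Fin n) (S : Finset (Fin n)) (k : Fin n) (d : ℤ) (hd : d = S.card) :
    V (ax n i (mono n S)) k ∈ edeg n d := by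
  subst hd
  have := edeg_mul (edeg_mul (ax_mem i) (mulOp_mem S)) (pd_mem k)
  unfold V; rw [mulOp_ax]
  rwa [show (1 : ℤ) + S.card + -1 = S.card by ring] at this

lemma Wmap_eq (F : Fin n → Lambda n) : Wmap n F = ∑ i, V (F i) i := rfl

lemma Wmap_single (k : Fin n) (f : Lambda n) : Wmap n (Pi.single k f) = V f k := by
  rw [Wmap_eq, Finset.sum_eq_single k]
  · simp
  · intro i _ h; rw [Pi.single_eq_of_ne h, V_zero]
  · simp

lemma divMap_single (k : Fin n) (f : Lambda n) : divMap n (Pi.single k f) = pd n k f := by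
  show ∑ i, pd n i ((Pi.single k f : Fin n → Lambda n) i) = _
  rw [Finset.sum_eq_single k]
  · simp
  · intro i _ h; rw [Pi.single_eq_of_ne h, map_zero]
  · simp

lemma typeA_mem (k : Fin n) (S : Finset (Fin n)) (h : k ∉ S) :
    (Pi.single k (mono n S) : Fin n → Lambda n) ∈ divFree n := by
  show divMap n _ = 0
  rw [divMap_single, pd_mono, if_neg h]

lemma typeB_mem (i j : Fin n) (T : Finset (Fin n)) (hi : i ∉ T) (hj : j ∉ T) :
    (Pi.single i (ax n i (mono n T)) - Pi.single j (ax n j (mono n T)) : Fin n → Lambda n)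
      ∈ divFree n := by
  show divMap n _ = 0
  rw [map_sub, divMap_single, divMap_single, pd_ax_apply, pd_ax_apply, pd_mono, pd_mono, if_neg hi,
    if_neg hj]
  simp

lemma divFree_le (N : Submodule ℂ (Fin n → Lambda n))
    (hA : ∀ k S, k ∉ S → Pi.single k (mono n S) ∈ N)
    (hB : ∀ i j T, i ∉ T → j ∉ T →
      Pi.single i (ax n i (mono n T)) - Pi.single j (ax n j (mono n T)) ∈ N) :
    divFree n ≤ N := by
  intro F hF
  have hF0 : ∑ i, pd n i (F i) = 0 := hF
  have key : ∀ T : Finset (Fin n), ∑ k, pd n k (F k) T • (Pi.single k (ax n k (mono n T)) : Fin n → Lambda n) ∈ N := by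
    intro T
    by_cases hT : ∃ j, j ∉ T
    · obtain ⟨j, hj⟩ := hT
      have h0 : ∑ k, pd n k (F k) T = 0 := by
        have := congrFun hF0 T
        simpa [Finset.sum_apply] using this
      have : ∑ k, pd n k (F k) T • (Pi.single k (ax n k (mono n T)) : Fin n → Lambda n)
          = ∑ k, pd n k (F k) T • ((Pi.single k (ax n k (mono n T)) : Fin n → Lambda n)
              - Pi.single j (ax n j (mono n T))) := by
        simp only [smul_sub, Finset.sum_sub_distrib, ← Finset.sum_smul, h0, zero_smul, sub_zero]
      rw [this]
      refine N.sum_mem fun k _ => ?_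
      by_cases hk : k ∈ T
      · rw [pd_apply, if_pos hk, zero_smul]; exact N.zero_mem
      · exact N.smul_mem _ (hB _ _ _ hk hj)
    · push Not at hT
      refine N.sum_mem fun k _ => ?_
      rw [pd_apply, if_pos (hT k), zero_smul]; exact N.zero_mem
  have e1 : F = ∑ k, (Pi.single k (pd n k (ax n k (F k))) : Fin n → Lambda n)
      + ∑ T, ∑ k, pd n k (F k) T • (Pi.single k (ax n k (mono n T)) : Fin n → Lambda n) := by
    rw [Finset.sum_comm, ← Finset.sum_add_distrib]
    conv_lhs => rw [← Finset.univ_sum_single F]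
    refine Finset.sum_congr rfl fun k _ => ?_
    have : ∑ T, pd n k (F k) T • (Pi.single k (ax n k (mono n T)) : Fin n → Lambda n)
        = Pi.single k (ax n k (pd n k (F k))) := by
      conv_rhs => rw [Lambda_eq_sum (pd n k (F k)), map_sum]
      rw [← LinearMap.single_apply ℂ, map_sum]
      refine Finset.sum_congr rfl fun T _ => ?_
      rw [map_smul, map_smul]; rfl
    rw [this, ← Pi.single_add, pd_ax_apply]; simp
  rw [e1]
  refine N.add_mem (N.sum_mem fun k _ => ?_) (N.sum_mem fun T _ => key T)
  rw [Lambda_eq_sum (pd n k (ax n k (F k))), ← LinearMap.single_apply ℂ, map_sum]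
  refine N.sum_mem fun T _ => ?_
  rw [map_smul]
  by_cases hk : k ∈ T
  · rw [pd_apply, if_pos hk, zero_smul]; exact N.zero_mem
  · exact N.smul_mem _ (hA _ _ hk)

lemma ax_pd_mono (j : Fin n) (S : Finset (Fin n)) (h : j ∈ S) :
    ax n j (pd n j (mono n S)) = mono n S := by
  have := pd_ax_apply j (mono n S)
  rw [ax_mono, if_pos h, map_zero] at this
  exact (sub_eq_zero.1 this.symm).symm

lemma mono_single (j : Fin n) : mono n {j} = ax n j (mono n ∅) := by
  rw [ax_mono]; simp [sg, msign]

lemma mono_mem_of_erase (M : Submodule ℂ (E n)) (S : Finset (Fin n)) (i k : Fin n) (hi : i ∈ S)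
    (h : V (ax n i (mono n (S.erase i))) k ∈ M) : V (mono n S) k ∈ M := by
  have := mono_insert i (S.erase i) (by simp)
  rw [Finset.insert_erase hi] at this
  rw [this, V_smul]; exact M.smul_mem _ h

/-! ### The special series -/

lemma typeA_gen (M : Submodule ℂ (E n)) (hc : ∀ x ∈ M, ∀ y ∈ M, sbL n x y ∈ M)
    (hA : ∀ k S, k ∉ S → S.card = 1 ∨ S.card = 2 → V (mono n S) k ∈ M)
    (hB : ∀ i j l, i ≠ l → j ≠ l → V (ax n i (mono n {l})) i - V (ax n j (mono n {l})) j ∈ M) :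
    ∀ (m : ℕ) (S : Finset (Fin n)), S.card = m → S.Nonempty → ∀ k, k ∉ S → V (mono n S) k ∈ M := by
  intro m
  induction m with
  | zero => intro S hS hne; rw [Finset.card_eq_zero] at hS; simp [hS] at hne
  | succ m ih =>
    intro S hS hne k hk
    by_cases hm : S.card = 1 ∨ S.card = 2
    · exact hA k S hk hm
    have hm2 : 2 ≤ m := by omega
    obtain ⟨i, hi⟩ := hne
    have hcard : (S.erase i).card = m := by rw [Finset.card_erase_of_mem hi, hS]; rfl
    have hne' : (S.erase i).Nonempty := by rw [← Finset.card_pos]; omega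
    have hk' : k ∉ S.erase i := fun h => hk (Finset.mem_of_mem_erase h)
    have h1 := ih (S.erase i) hcard hne' k hk'
    obtain ⟨j, hj⟩ := hne'
    have hji : j ≠ i := Finset.ne_of_mem_erase hj
    have hki : k ≠ i := fun h => hk (h ▸ hi)
    have hkj : k ≠ j := fun h => hk' (h ▸ hj)
    have h2 := hc _ (hB j k i hji hki) _ h1
    apply mono_mem_of_erase M S i k hi
    rw [map_sub, LinearMap.sub_apply, sb_V, sb_V, mono_single] at h2
    simp only [mulOp_ax, Module.End.mul_apply, mulOp_one, Module.End.one_apply, par_ax_apply,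
      par_one, map_neg, pd_ax_apply, pd_ax_apply_ne hkj, pd_ax_apply_ne hki, pd_one, map_zero, neg_zero, neg_neg, sub_zero, LinearMap.neg_apply, LinearMap.zero_apply, V_zero, zero_add, add_zero] at h2
    have e3 : pd n k (mono n (S.erase i)) = 0 := by rw [pd_mono, if_neg hk']
    have e4 : ax n j (ax n i (pd n j (mono n (S.erase i)))) = - ax n i (mono n (S.erase i)) := by
      have := LinearMap.congr_fun (ax_ax j i) (pd n j (mono n (S.erase i)))
      simp only [Module.End.mul_apply, LinearMap.neg_apply] at this
      rw [this, ax_pd_mono j _ hj]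
    rw [e4, e3] at h2
    simp only [map_zero, V_zero, zero_add, V_neg] at h2
    have h3 := M.smul_mem (-(2:ℂ)⁻¹) h2
    convert h3 using 1
    module

lemma typeB_gen (M : Submodule ℂ (E n)) (hc : ∀ x ∈ M, ∀ y ∈ M, sbL n x y ∈ M)
    (hA : ∀ k (S : Finset (Fin n)), S.Nonempty → k ∉ S → V (mono n S) k ∈ M)
    (i j : Fin n) (T : Finset (Fin n)) (hi : i ∉ T) (hj : j ∉ T) :
    V (ax n i (mono n T)) i - V (ax n j (mono n T)) j ∈ M := by
  by_cases hij : i = j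
  · subst hij; rw [sub_self]; exact M.zero_mem
  have h1 : V (ax n i (mono n T)) j ∈ M := by
    rw [ax_mono, if_neg hi, V_smul]
    exact M.smul_mem _ (hA _ _ (by simp) (by simp [hj, Ne.symm hij]))
  have h2 : V (ax n j (mono n ∅)) i ∈ M := by
    rw [← mono_single]; exact hA _ _ (by simp) (by simpa using hij)
  have h3 := hc _ h1 _ h2
  have e1 : mulOp n (par n (mono n T)) (ax n j (mono n ∅)) = ax n j (mono n T) := by
    have := LinearMap.congr_fun (mulOp_mul_ax (par n (mono n T)) j) (mono n ∅)
    simpa only [Module.End.mul_apply, par_par_apply, mulOp_apply_one] using this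
  have e2 : pd n i (par n (mono n T)) = 0 := by
    rw [par_mono, map_smul, pd_mono, if_neg hi, smul_zero]
  rw [sb_V, pd_ax_apply, pd_one, map_zero, sub_zero, mulOp_apply_one, par_ax_apply, map_neg,
    pd_ax_apply, e2, map_zero, sub_zero, map_neg, LinearMap.neg_apply, e1, V_neg] at h3
  rwa [sub_eq_add_neg]

lemma mulOp_oneM_mono (S : Finset (Fin n)) (h : S.Nonempty) :
    mulOp n (oneM n) (mono n S) = mono n S := by
  unfold oneM omegaTop
  rw [map_sub, LinearMap.sub_apply, mulOp_one, mulOp_mono_mono_zero]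
  · simp
  · intro h'
    obtain ⟨x, hx⟩ := h
    exact Finset.disjoint_left.1 h' (Finset.mem_univ x) hx

lemma mulOp_oneM_ax (i : Fin n) (S : Finset (Fin n)) :
    mulOp n (oneM n) (ax n i (mono n S)) = ax n i (mono n S) := by
  rw [ax_mono]
  split_ifs
  · simp
  · rw [map_smul, mulOp_oneM_mono _ (by simp)]

lemma Stmap_single (k : Fin n) (f : Lambda n) :
    (Wmap n ∘ₗ oneMScale n) (Pi.single k f) = V (mulOp n (oneM n) f) k := by
  have : oneMScale n (Pi.single k f) = Pi.single k (mulOp n (oneM n) f) := by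
    funext i
    show mulOp n (oneM n) ((Pi.single k f : Fin n → Lambda n) i) = _
    by_cases h : i = k
    · subst h; simp
    · rw [Pi.single_eq_of_ne h, Pi.single_eq_of_ne h, map_zero]
  rw [LinearMap.comp_apply, this, Wmap_single]

lemma gen_S (M : Submodule ℂ (E n)) (hc : ∀ x ∈ M, ∀ y ∈ M, sbL n x y ∈ M)
    (hcont : CT.grade .S n (-1) ⊔ CT.grade .S n 0 ⊔ CT.grade .S n 1 ≤ M) : Sn n ≤ M := by
  have hm1 : Sn n ⊓ edeg n (-1) ≤ M := (le_sup_left.trans le_sup_left).trans hcont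
  have h0 : Sn n ⊓ edeg n 0 ≤ M := (le_sup_right.trans le_sup_left).trans hcont
  have h1 : Sn n ⊓ edeg n 1 ≤ M := le_sup_right.trans hcont
  have mA : ∀ k S, k ∉ S → V (mono n S) k ∈ Sn n := fun k S h =>
    ⟨_, typeA_mem k S h, Wmap_single _ _⟩
  have gA : ∀ k (S : Finset (Fin n)), S.Nonempty → k ∉ S → V (mono n S) k ∈ M := by
    intro k S hS hk
    refine typeA_gen M hc ?_ ?_ _ S rfl hS k hk
    · rintro k S hk (h | h)
      · exact h0 ⟨mA k S hk, V_mem _ _ _ (by rw [h]; simp)⟩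
      · exact h1 ⟨mA k S hk, V_mem _ _ _ (by rw [h]; norm_num)⟩
    · intro i j l hi hj
      refine h1 ⟨⟨_, typeB_mem i j {l} (by simpa using hi) (by simpa using hj), ?_⟩, ?_⟩
      · rw [map_sub, Wmap_single, Wmap_single]
      · exact Submodule.sub_mem _ (V_ax_mem _ _ _ _ (by simp)) (V_ax_mem _ _ _ _ (by simp))
  unfold Sn
  rw [Submodule.map_le_iff_le_comap]
  apply divFree_le
  · intro k S hk
    rw [Submodule.mem_comap, Wmap_single]
    rcases S.eq_empty_or_nonempty with rfl | hS
    · exact hm1 ⟨mA k ∅ hk, V_mem _ _ _ (by simp)⟩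
    · exact gA k S hS hk
  · intro i j T hi hj
    rw [Submodule.mem_comap, map_sub, Wmap_single, Wmap_single]
    exact typeB_gen M hc gA i j T hi hj

lemma gen_St (M : Submodule ℂ (E n)) (hc : ∀ x ∈ M, ∀ y ∈ M, sbL n x y ∈ M)
    (hcont : CT.grade .St n (-1) ⊔ CT.grade .St n 0 ⊔ CT.grade .St n 1 ≤ M) : Stn n ≤ M := by
  have hm1 : Submodule.span ℂ (Set.range fun i : Fin n => mulOp n (oneM n) * pd n i) ≤ M := by
    have := (le_sup_left.trans le_sup_left).trans hcont
    simpa [CT.grade] using this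
  have h0 : Stn n ⊓ edeg n 0 ≤ M := by
    have := (le_sup_right.trans le_sup_left).trans hcont
    simpa [CT.grade] using this
  have h1 : Stn n ⊓ edeg n 1 ≤ M := by
    have := (le_sup_right (a := CT.grade .St n (-1) ⊔ CT.grade .St n 0)).trans hcont
    have e : CT.grade .St n 1 = Stn n ⊓ edeg n 1 := by
      unfold CT.grade; exact if_neg (by norm_num)
    rwa [e] at this
  have mA : ∀ k S, S.Nonempty → k ∉ S → V (mono n S) k ∈ Stn n := fun k S hS h =>
    ⟨_, typeA_mem k S h, by rw [Stmap_single, mulOp_oneM_mono _ hS]⟩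
  have gA : ∀ k (S : Finset (Fin n)), S.Nonempty → k ∉ S → V (mono n S) k ∈ M := by
    intro k S hS hk
    refine typeA_gen M hc ?_ ?_ _ S rfl hS k hk
    · rintro k S hk (h | h)
      · exact h0 ⟨mA k S (by rw [← Finset.card_pos]; omega) hk, V_mem _ _ _ (by rw [h]; simp)⟩
      · exact h1 ⟨mA k S (by rw [← Finset.card_pos]; omega) hk, V_mem _ _ _ (by rw [h]; norm_num)⟩
    · intro i j l hi hj
      refine h1 ⟨⟨_, typeB_mem i j {l} (by simpa using hi) (by simpa using hj), ?_⟩, ?_⟩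
      · rw [map_sub, Stmap_single, Stmap_single, mulOp_oneM_ax, mulOp_oneM_ax]
      · exact Submodule.sub_mem _ (V_ax_mem _ _ _ _ (by simp)) (V_ax_mem _ _ _ _ (by simp))
  unfold Stn
  rw [Submodule.map_le_iff_le_comap]
  apply divFree_le
  · intro k S hk
    rw [Submodule.mem_comap, Stmap_single]
    rcases S.eq_empty_or_nonempty with rfl | hS
    · rw [mulOp_apply_one]; exact hm1 (Submodule.subset_span ⟨k, rfl⟩)
    · rw [mulOp_oneM_mono _ hS]; exact gA k S hS hk
  · intro i j T hi hj
    rw [Submodule.mem_comap, map_sub, Stmap_single, Stmap_single, mulOp_oneM_ax, mulOp_oneM_ax]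
    exact typeB_gen M hc gA i j T hi hj

/-! ### The Witt series -/

lemma gen_W (M : Submodule ℂ (E n)) (hc : ∀ x ∈ M, ∀ y ∈ M, sbL n x y ∈ M)
    (hcont : CT.grade .W n (-1) ⊔ CT.grade .W n 0 ⊔ CT.grade .W n 1 ≤ M) : Wn n ≤ M := by
  have hm1 : Wn n ⊓ edeg n (-1) ≤ M := (le_sup_left.trans le_sup_left).trans hcont
  have h0 : Wn n ⊓ edeg n 0 ≤ M := (le_sup_right.trans le_sup_left).trans hcont
  have h1 : Wn n ⊓ edeg n 1 ≤ M := le_sup_right.trans hcont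
  have mW : ∀ f k, V (n := n) f k ∈ Wn n := fun f k => ⟨_, Wmap_single k f⟩
  have gen : ∀ (m : ℕ) (S : Finset (Fin n)), S.card = m → ∀ k, V (mono n S) k ∈ M := by
    intro m
    induction m with
    | zero => intro S hS k; exact hm1 ⟨mW _ _, V_mem _ _ _ (by rw [hS]; simp)⟩
    | succ m ih =>
      intro S hS k
      rcases (by omega : m = 0 ∨ m = 1 ∨ 2 ≤ m) with rfl | rfl | hm
      · exact h0 ⟨mW _ _, V_mem _ _ _ (by rw [hS]; simp)⟩
      · exact h1 ⟨mW _ _, V_mem _ _ _ (by rw [hS]; norm_num)⟩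
      have hc2 : 1 < (S.erase k).card := by
        have := Finset.pred_card_le_card_erase (s := S) (a := k); omega
      obtain ⟨i, hi, j, hj, hij⟩ := Finset.one_lt_card.1 hc2
      rw [Finset.mem_erase] at hi hj
      have h2 := ih (S.erase i) (by rw [Finset.card_erase_of_mem hi.2, hS]; rfl) k
      have h3 : V (ax n i (mono n {j})) j ∈ M := h1 ⟨mW _ _, V_ax_mem _ _ _ _ (by simp)⟩
      have h4 := hc _ h3 _ h2
      apply mono_mem_of_erase M S i k hi.2
      rw [sb_V, mono_single] at h4
      simpa only [mulOp_ax, Module.End.mul_apply, mulOp_one, Module.End.one_apply, par_ax_apply,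
        par_one, map_neg, pd_ax_apply_ne (Ne.symm hi.1), pd_ax_apply_ne (Ne.symm hj.1), pd_one,
        map_zero, neg_zero, neg_neg, LinearMap.neg_apply, LinearMap.zero_apply, V_zero, add_zero,
        ax_pd_mono j _ (Finset.mem_erase.2 ⟨Ne.symm hij, hj.2⟩)] using h4
  rintro _ ⟨F, rfl⟩
  rw [Wmap_eq]
  refine M.sum_mem fun k _ => ?_
  rw [Lambda_eq_sum (F k), V_sum]
  refine M.sum_mem fun S _ => ?_
  rw [V_smul]; exact M.smul_mem _ (gen _ S rfl k)

/-! ### The Hamiltonian series -/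

lemma cidx_cidx (i : Fin n) : cidx n (cidx n i) = i := by
  have := i.isLt
  apply Fin.ext
  simp only [cidx]
  split_ifs <;> omega

lemma cidx_fixed {i : Fin n} (h : cidx n i = i) : i.val + 1 = n := by
  have := i.isLt
  have h2 := congrArg Fin.val h
  simp only [cidx] at h2
  split_ifs at h2 <;> omega

/-- The conjugation as a permutation. -/
def cperm : Equiv.Perm (Fin n) := ⟨cidx n, cidx n, cidx_cidx, cidx_cidx⟩

lemma DH_eq (f : Lambda n) : DHmap n f = ∑ i, V (pd n i (par n f)) (cidx n i) := rfl

lemma DH_apply (f g : Lambda n) :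
    DHmap n f g = ∑ i, mulOp n (pd n i (par n f)) (pd n (cidx n i) g) := by
  rw [DH_eq, LinearMap.sum_apply]; rfl

lemma pd_par_mul (j : Fin n) (u w : Lambda n) :
    pd n j (par n (mulOp n u w)) =
      mulOp n (pd n j (par n u)) (par n w) + mulOp n u (pd n j (par n w)) := by
  have h1 := LinearMap.congr_fun (par_mulOp u) w
  have h2 := LinearMap.congr_fun (pd_mulOp j (par n u)) (par n w)
  simp only [Module.End.mul_apply, LinearMap.add_apply, par_par_apply] at h1 h2
  rw [h1, h2]

lemma sb_DH (f g : Lambda n) : sbL n (DHmap n f) (DHmap n g) = DHmap n (DHmap n f g) := by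
  have hR : DHmap n (DHmap n f g) = ∑ j, ∑ k,
      (V (mulOp n (pd n j (pd n k f)) (pd n (cidx n k) (par n g))) (cidx n j)
        + V (mulOp n (pd n k (par n f)) (pd n (cidx n k) (pd n j (par n g)))) (cidx n j)) := by
    rw [DH_eq]
    refine Finset.sum_congr rfl fun j _ => ?_
    rw [DH_apply, map_sum, map_sum, V_sum]
    refine Finset.sum_congr rfl fun k _ => ?_
    rw [pd_par_mul, par_pd_apply, par_pd_apply, par_par_apply, V_add]
    simp only [map_neg, LinearMap.neg_apply, neg_neg]
    rw [pd_pd_apply j (cidx n k)]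
    simp only [map_neg, neg_neg]
  rw [hR, DH_eq f, DH_eq g, LinearMap.map_sum₂]
  simp only [map_sum, sb_V, Finset.sum_add_distrib]
  rw [add_comm]
  refine congrArg₂ (· + ·) ?_ ?_
  · refine Finset.sum_congr rfl fun i _ => ?_
    rw [← Equiv.sum_comp (cperm (n := n))]
    refine Finset.sum_congr rfl fun k _ => ?_
    show V (mulOp n (pd n (cidx n (cidx n k)) (par n (pd n i (par n f)))) (pd n (cidx n k) (par n g))) _ = _
    rw [cidx_cidx, par_pd_apply, par_par_apply, map_neg, pd_pd_apply k i, neg_neg]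
  · exact Finset.sum_comm

lemma DH_mono (F G : Finset (Fin n)) (u : Fin n) (hu : u ∈ F) (hu' : cidx n u ∈ G)
    (hd : Disjoint (F.erase u) (G.erase (cidx n u)))
    (hk : ∀ k ≠ u, k ∈ F → cidx n k ∈ G → ¬ Disjoint (F.erase k) (G.erase (cidx n k))) :
    ∃ c : ℂ, c ≠ 0 ∧ DHmap n (mono n F) (mono n G) =
      c • mono n (F.erase u ∪ G.erase (cidx n u)) := by
  rw [DH_apply, Finset.sum_eq_single u]
  · rw [par_mono, map_smul, pd_mono, if_pos hu, pd_mono, if_pos hu']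
    simp only [map_smul, LinearMap.smul_apply]
    rw [mulOp_mono_mono_disj _ _ hd, smul_smul, smul_smul, smul_smul]
    exact ⟨_, by simp [msign_ne, sg_ne], rfl⟩
  · intro k _ hne
    rw [par_mono, map_smul, pd_mono, pd_mono]
    split_ifs with h1 h2
    · simp only [map_smul, LinearMap.smul_apply]
      rw [mulOp_mono_mono_zero _ _ (hk k hne h1 h2)]
      simp
    all_goals simp
  · simp

lemma comb_case2 (S : Finset (Fin n)) (hS : 4 ≤ S.card) (a : Fin n) (ha : a ∉ S)
    (ha' : cidx n a ∈ S) :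
    ∃ (F G : Finset (Fin n)) (u : Fin n), u ∈ F ∧ cidx n u ∈ G ∧
      Disjoint (F.erase u) (G.erase (cidx n u)) ∧
      (∀ k ≠ u, k ∈ F → cidx n k ∈ G → ¬ Disjoint (F.erase k) (G.erase (cidx n k))) ∧
      F.erase u ∪ G.erase (cidx n u) = S ∧ F.card < S.card ∧ G.card < S.card := by
  obtain ⟨q, hq⟩ : (S.erase (cidx n a)).Nonempty := by
    rw [← Finset.card_pos, Finset.card_erase_of_mem ha']; omega
  rw [Finset.mem_erase] at hq
  have hpa : cidx n a ≠ a := fun h => ha (h ▸ ha')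
  have hqa : q ≠ a := fun h => ha (h ▸ hq.2)
  have e1 : ({a, cidx n a, q} : Finset (Fin n)).erase a = {cidx n a, q} := by
    apply Finset.erase_insert; simp [hpa.symm, hqa.symm]
  refine ⟨{a, cidx n a, q}, S.erase q, a, by simp, ?_, ?_, ?_, ?_, ?_, ?_⟩
  · simp [ha', Ne.symm hq.1]
  · rw [e1, Finset.disjoint_left]; intro x; simp; tauto
  · intro k hka hkF hkG
    simp only [Finset.mem_insert, Finset.mem_singleton] at hkF
    rcases hkF with rfl | rfl | rfl
    · exact absurd rfl hka
    · rw [cidx_cidx] at hkG; exact absurd (Finset.mem_of_mem_erase hkG) ha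
    · rw [Finset.not_disjoint_iff]
      refine ⟨cidx n a, ?_, ?_⟩
      · simp [Ne.symm hq.1]
      · simp only [Finset.mem_erase]
        refine ⟨fun h => hqa ?_, Ne.symm hq.1, ha'⟩
        rw [← cidx_cidx k, ← h, cidx_cidx]
  · rw [e1]; ext x
    simp only [Finset.mem_union, Finset.mem_insert, Finset.mem_singleton, Finset.mem_erase]
    constructor
    · rintro ((rfl | rfl) | h)
      · exact ha'
      · exact hq.2
      · exact h.2.2
    · tauto
  · exact lt_of_le_of_lt Finset.card_le_three (by omega)
  · rw [Finset.card_erase_of_mem hq.2]; omega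

lemma comb (S : Finset (Fin n)) (hS : 4 ≤ S.card) (hne : S ≠ Finset.univ) :
    ∃ (F G : Finset (Fin n)) (u : Fin n), u ∈ F ∧ cidx n u ∈ G ∧
      Disjoint (F.erase u) (G.erase (cidx n u)) ∧
      (∀ k ≠ u, k ∈ F → cidx n k ∈ G → ¬ Disjoint (F.erase k) (G.erase (cidx n k))) ∧
      F.erase u ∪ G.erase (cidx n u) = S ∧ F.card < S.card ∧ G.card < S.card := by
  obtain ⟨a, ha⟩ : ∃ a, a ∉ S := by
    by_contra h; push Not at h; exact hne (Finset.eq_univ_iff_forall.2 h)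
  by_cases hcl : ∃ p ∈ S, cidx n p ∉ S
  · obtain ⟨p, hp, hp'⟩ := hcl
    exact comb_case2 S hS (cidx n p) hp' (by rwa [cidx_cidx])
  push Not at hcl
  have ha' : cidx n a ∉ S := fun h => ha (by have := hcl _ h; rwa [cidx_cidx] at this)
  by_cases haa : cidx n a = a
  · obtain ⟨F1, hF1, hc1⟩ := Finset.exists_subset_card_eq (s := S) (n := 2) (by omega)
    have haF : a ∉ F1 := fun h => ha (hF1 h)
    have haG : a ∉ S \ F1 := fun h => ha (Finset.sdiff_subset h)
    refine ⟨insert a F1, insert a (S \ F1), a, by simp, by simp [haa], ?_, ?_, ?_, ?_, ?_⟩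
    · rw [haa, Finset.erase_insert haF, Finset.erase_insert haG]
      exact Finset.disjoint_sdiff
    · intro k hk _ _
      rw [Finset.not_disjoint_iff]
      refine ⟨a, by simp [hk.symm], ?_⟩
      simp only [Finset.mem_erase, Finset.mem_insert, true_or, and_true]
      intro h; apply hk; rw [← cidx_cidx k, ← h, haa]
    · rw [haa, Finset.erase_insert haF, Finset.erase_insert haG, Finset.union_sdiff_of_subset hF1]
    · rw [Finset.card_insert_of_notMem haF]; omega
    · rw [Finset.card_insert_of_notMem haG, Finset.card_sdiff_of_subset hF1]; omega
  · obtain ⟨b, hb, hbb⟩ : ∃ b ∈ S, cidx n b ≠ b := by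
      obtain ⟨b, hb, c, hc, hbc⟩ := Finset.one_lt_card.1 (show 1 < S.card by omega)
      by_cases h1 : cidx n b = b
      · refine ⟨c, hc, fun h2 => hbc (Fin.ext ?_)⟩
        have := cidx_fixed h1; have := cidx_fixed h2; omega
      · exact ⟨b, hb, h1⟩
    have hb' := hcl b hb
    have hab : a ≠ b := fun h => ha (h ▸ hb)
    have hab' : a ≠ cidx n b := fun h => ha (h ▸ hb')
    have haG : cidx n a ∉ S \ {b, cidx n b} := fun h => ha' (Finset.sdiff_subset h)
    have e1 : ({a, b, cidx n b} : Finset (Fin n)).erase a = {b, cidx n b} := by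
      apply Finset.erase_insert; simp [hab, hab']
    have hsub : ({b, cidx n b} : Finset (Fin n)) ⊆ S := by
      intro x hx; simp only [Finset.mem_insert, Finset.mem_singleton] at hx
      rcases hx with rfl | rfl <;> assumption
    refine ⟨{a, b, cidx n b}, insert (cidx n a) (S \ {b, cidx n b}), a, by simp, by simp, ?_, ?_,
      ?_, ?_, ?_⟩
    · rw [e1, Finset.erase_insert haG]; exact Finset.disjoint_sdiff
    · intro k hka hkF hkG
      exfalso
      simp only [Finset.mem_insert, Finset.mem_singleton, Finset.mem_sdiff, not_or] at hkF hkG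
      rcases hkF with rfl | rfl | rfl
      · exact hka rfl
      · rcases hkG with h | h
        · exact ha' (h ▸ hb')
        · exact h.2.2 rfl
      · rw [cidx_cidx] at hkG
        rcases hkG with h | h
        · exact ha' (h ▸ hb)
        · exact h.2.1 rfl
    · rw [e1, Finset.erase_insert haG, Finset.union_sdiff_of_subset hsub]
    · exact lt_of_le_of_lt Finset.card_le_three (by omega)
    · rw [Finset.card_insert_of_notMem haG, Finset.card_sdiff_of_subset hsub,
        Finset.card_pair (Ne.symm hbb)]
      omega

lemma DH_mem (S : Finset (Fin n)) (d : ℤ) (hd : d = S.card - 2) :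
    DHmap n (mono n S) ∈ edeg n d := by
  rw [DH_eq]
  refine Submodule.sum_mem _ fun i _ => ?_
  rw [par_mono, map_smul, pd_mono, V_smul]
  apply Submodule.smul_mem
  split_ifs with h
  · rw [V_smul]
    apply Submodule.smul_mem
    apply V_mem
    have := Finset.card_pos.2 ⟨i, h⟩
    rw [hd, Finset.card_erase_of_mem h]; omega
  · rw [V_zero]; exact Submodule.zero_mem _

lemma gen_H (M : Submodule ℂ (E n)) (hc : ∀ x ∈ M, ∀ y ∈ M, sbL n x y ∈ M)
    (hcont : CT.grade .H n (-1) ⊔ CT.grade .H n 0 ⊔ CT.grade .H n 1 ≤ M) : Hn n ≤ M := by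
  have hm1 : Hn n ⊓ edeg n (-1) ≤ M := (le_sup_left.trans le_sup_left).trans hcont
  have h0 : Hn n ⊓ edeg n 0 ≤ M := (le_sup_right.trans le_sup_left).trans hcont
  have h1 : Hn n ⊓ edeg n 1 ≤ M := le_sup_right.trans hcont
  have mH : ∀ S, S ≠ Finset.univ → DHmap n (mono n S) ∈ Hn n := by
    intro S hS
    refine ⟨_, ?_, rfl⟩
    show mono n S Finset.univ = 0
    simp [mono, Ne.symm hS]
  have gen : ∀ (m : ℕ) (S : Finset (Fin n)), S.card = m → S ≠ Finset.univ →
      DHmap n (mono n S) ∈ M := by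
    intro m
    induction m using Nat.strong_induction_on with
    | _ m ih =>
      intro S hS hne
      rcases (by omega : m = 0 ∨ m = 1 ∨ m = 2 ∨ m = 3 ∨ 4 ≤ m) with rfl | rfl | rfl | rfl | hm
      · rw [Finset.card_eq_zero] at hS
        subst hS
        rw [DH_eq]
        refine M.sum_mem fun i _ => ?_
        rw [par_one, pd_one, V_zero]; exact M.zero_mem
      · exact hm1 ⟨mH S hne, DH_mem _ _ (by rw [hS]; norm_num)⟩
      · exact h0 ⟨mH S hne, DH_mem _ _ (by rw [hS]; norm_num)⟩
      · exact h1 ⟨mH S hne, DH_mem _ _ (by rw [hS]; norm_num)⟩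
      · obtain ⟨F, G, u, hu, hu', hd, hk, hU, hF, hG⟩ := comb S (by omega) hne
        obtain ⟨c, hc0, hcc⟩ := DH_mono F G u hu hu' hd hk
        have hlt : ∀ T : Finset (Fin n), T.card < S.card → T ≠ Finset.univ := by
          rintro T hT rfl
          exact absurd (Finset.card_le_univ S) (by rw [Finset.card_univ] at hT; omega)
        have h2 := hc _ (ih _ (hS ▸ hF) F rfl (hlt F hF)) _ (ih _ (hS ▸ hG) G rfl (hlt G hG))
        rw [sb_DH, hcc, hU, map_smul] at h2
        have h3 := M.smul_mem c⁻¹ h2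
        rwa [smul_smul, inv_mul_cancel₀ hc0, one_smul] at h3
  rintro _ ⟨f, hf, rfl⟩
  have hf0 : f Finset.univ = 0 := hf
  rw [Lambda_eq_sum f, map_sum]
  refine M.sum_mem fun S _ => ?_
  rw [map_smul]
  by_cases hS : S = Finset.univ
  · rw [hS, hf0, zero_smul]; exact M.zero_mem
  · exact M.smul_mem _ (gen _ S rfl hS)

/-- A Cartan type Lie superalgebra `L` over `ℂ` is generated as a Lie
superalgebra by `L_{−1} ⊕ L_0 ⊕ L_1`: the smallest subalgebra of `L` containing
`L_{−1} ⊕ L_0 ⊕ L_1` equals `L`. -/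
theorem generated_by_local_part (n : ℕ) (t : CT) (ht : t.valid n)
    (M : Submodule ℂ (E n)) (hML : M ≤ t.algebra n)
    (hcont : t.grade n (-1) ⊔ t.grade n 0 ⊔ t.grade n 1 ≤ M)
    (hclosed : ∀ x ∈ M, ∀ y ∈ M, sbL n x y ∈ M) :
    M = t.algebra n := by
  apply le_antisymm hML
  cases t with
  | W => exact gen_W M hclosed hcont
  | S => exact gen_S M hclosed hcont
  | St => exact gen_St M hclosed hcont
  | H => exact gen_H M hclosed hcont

end CartanSuper
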